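/- arXiv:1908.01008 — 2 statements merged into one kernel-verified Lean document; each statement's English description precedes it below -/
import Mathlib

section
/- Let u be an information structure on K × C × D that exhibits ε-knowledge of the state, i.e. there is a map κ : C ∪ D → K such that u({(k,c,d) : u(k = κ(c) | c) ≥ 1−ε}) ≥ 1−ε and u({(k,c,d) : u(k = κ(d) | d) ≥ 1−ε}) ≥ 1−ε. Let v be the information structure on K × K_C × K_D with K_C = K_D = K, marg_K v = marg_K u, and v(k = k_C = k_D) = 1 (common knowledge of the state). Then d(u,v) ≤ 20ε. -/
open scoped BigOperators ENNReal

namespace ValueDistance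

/-- An information structure: a probability distribution on `K × ℕ × ℕ`
(state, signal of player 1, signal of player 2). -/
abbrev InfoStruct (K : Type) := PMF (K × ℕ × ℕ)

/-- A behavior strategy / garbling : a map `ℕ → Δ(ℕ)`. -/
abbrev Garbling : Type := ℕ → PMF ℕ

variable {K : Type}

/-- `g` is a payoff function with action bound `L` : values in `[-1,1]`,
`g k i j = -1` when `i ≥ L`, and `g k i j = 1` when `i < L` and `j ≥ L`. -/
def IsPayoffL (L : ℕ) (g : K → ℕ → ℕ → ℝ) : Prop :=
  (∀ k i j, g k i j ∈ Set.Icc (-1 : ℝ) 1) ∧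
  (∀ k i j, L ≤ i → g k i j = -1) ∧
  (∀ k i j, i < L → L ≤ j → g k i j = 1)

/-- `g` belongs to the set `𝒢` of payoff functions. -/
def IsPayoff (g : K → ℕ → ℕ → ℝ) : Prop := ∃ L, IsPayoffL L g

/-- `g` belongs to the set `𝒢₁` of single-agent (player 1) problems. -/
def IsPayoff1 (g : K → ℕ → ℕ → ℝ) : Prop :=
  IsPayoff g ∧ ∀ k i j j', g k i j = g k i j'

/-- Expected payoff in the Bayesian game `Γ(u,g)` when player 1 uses the behavior
strategy `σ` and player 2 uses `τ`. -/
noncomputable def payoff (u : InfoStruct K) (g : K → ℕ → ℕ → ℝ)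
    (σ τ : Garbling) : ℝ :=
  ∑' (x : K × ℕ × ℕ) (i : ℕ) (j : ℕ),
    (u x).toReal * (σ x.2.1 i).toReal * (τ x.2.2 j).toReal * g x.1 i j

/-- The value `val(u,g)` of the zero-sum Bayesian game `Γ(u,g)`
(the common value of `sup inf` and `inf sup` of the expected payoff;
we take `sup inf` as the definition). -/
noncomputable def val (u : InfoStruct K) (g : K → ℕ → ℕ → ℝ) : ℝ :=
  ⨆ σ : Garbling, ⨅ τ : Garbling, payoff u g σ τ

/-- Total variation distance `‖u − v‖`. -/
noncomputable def tv {α : Type} (u v : PMF α) : ℝ :=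
  ∑' x : α, |(u x).toReal - (v x).toReal|

/-- `q.u` : player 1's signal garbled through `q`. -/
noncomputable def garbleLeft (q : Garbling) (u : InfoStruct K) : InfoStruct K :=
  u.bind (fun x => (q x.2.1).map (fun c => (x.1, c, x.2.2)))

/-- `u.q` : player 2's signal garbled through `q`. -/
noncomputable def garbleRight (u : InfoStruct K) (q : Garbling) : InfoStruct K :=
  u.bind (fun x => (q x.2.2).map (fun d => (x.1, x.2.1, d)))

/-- The value-based distance `d(u,v) = sup_{g ∈ 𝒢} |val(u,g) − val(v,g)|`. -/
noncomputable def dVal (u v : InfoStruct K) : ℝ :=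
  ⨆ g : {g : K → ℕ → ℕ → ℝ // IsPayoff g}, |val u g.1 - val v g.1|

/-- The single-agent distance `d₁(u,v) = sup_{g ∈ 𝒢₁} |val(u,g) − val(v,g)|`. -/
noncomputable def d1 (u v : InfoStruct K) : ℝ :=
  ⨆ g : {g : K → ℕ → ℕ → ℝ // IsPayoff1 g}, |val u g.1 - val v g.1|

/-- Marginal of an information structure on `K × ℕ` (state, player 1's signal). -/
noncomputable def marg1 (u : InfoStruct K) : PMF (K × ℕ) :=
  u.map (fun x => (x.1, x.2.1))

/-- Garbling of a single-agent information structure: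
`(q.w)(k,c) = Σ_s w(k,s)·q(s)({c})`. -/
noncomputable def garble1 (q : Garbling) (w : PMF (K × ℕ)) : PMF (K × ℕ) :=
  w.bind (fun x => (q x.2).map (fun c => (x.1, c)))

/-- Marginal of an information structure on the states. -/
noncomputable def margK (u : InfoStruct K) : PMF K := u.map Prod.fst

/-- Marginal of an information structure on `K × ℕ` (state, player 2's signal). -/
noncomputable def margKD (u : InfoStruct K) : PMF (K × ℕ) :=
  u.map (fun x => (x.1, x.2.2))

/-- `σ.q` : on signal `c`, draw `c'` according to `q(c)` and play `σ(c')`. -/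
noncomputable def compGarble (σ q : Garbling) : Garbling :=
  fun c => (q c).bind σ

/-- `u ∈ 𝒰(L)` : both players' signals are `< L` with probability 1. -/
def InU (L : ℕ) (u : InfoStruct K) : Prop :=
  ∀ x : K × ℕ × ℕ, u x ≠ 0 → x.2.1 < L ∧ x.2.2 < L

/-- `q ∈ 𝒬(L)` : garbling with values supported on `{0,…,L−1}`. -/
def GarblingIn (L : ℕ) (q : Garbling) : Prop :=
  ∀ n m, q n m ≠ 0 → m < L

/-- The two players' signals are conditionally independent given the state:
`u(k)·u(k,c,d) = u(k,c)·u(k,d)` for all `k, c, d`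
(equivalently `u(c,d|k) = u(c|k)·u(d|k)` whenever `u(k) > 0`). -/
def CondIndep (u : InfoStruct K) : Prop :=
  ∀ (k : K) (c d : ℕ),
    (∑' y : ℕ × ℕ, u (k, y)) * u (k, c, d)
      = (∑' d' : ℕ, u (k, c, d')) * (∑' c' : ℕ, u (k, c', d))

end ValueDistance

namespace ValueDistance

/-- `u(k = κ(c) | c)` : conditional probability, given player 1's signal `c`,
that the state equals `κ(c)`. -/
noncomputable def condStateC (u : InfoStruct K) (κ : ℕ → K) (c : ℕ) : ℝ :=
  (∑' d : ℕ, u (κ c, c, d)).toReal / (∑' (k : K) (d : ℕ), u (k, c, d)).toReal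

/-- `u(k = κ(d) | d)` : conditional probability, given player 2's signal `d`,
that the state equals `κ(d)`. -/
noncomputable def condStateD (u : InfoStruct K) (κ : ℕ → K) (d : ℕ) : ℝ :=
  (∑' c : ℕ, u (κ d, c, d)).toReal / (∑' (k : K) (c : ℕ), u (k, c, d)).toReal


noncomputable def Ex {α : Type} (p : PMF α) (f : α → ℝ) : ℝ := ∑' a, (p a).toReal * f a

lemma summ_p {α : Type} (p : PMF α) : Summable (fun a => (p a).toReal) :=
  ENNReal.summable_toReal p.tsum_coe_ne_top

lemma tsum_p {α : Type} (p : PMF α) : ∑' a, (p a).toReal = 1 := by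
  rw [← ENNReal.tsum_toReal_eq (fun a => p.apply_ne_top a), p.tsum_coe]; rfl

lemma summ_E {α : Type} (p : PMF α) (f : α → ℝ) (B : ℝ) (hf : ∀ a, |f a| ≤ B) :
    Summable (fun a => (p a).toReal * f a) := by
  refine Summable.of_norm_bounded ((summ_p p).mul_right B) (fun a => ?_)
  rw [Real.norm_eq_abs, abs_mul, abs_of_nonneg ENNReal.toReal_nonneg]
  exact mul_le_mul_of_nonneg_left (hf a) ENNReal.toReal_nonneg

lemma Ex_const {α : Type} (p : PMF α) (c : ℝ) : Ex p (fun _ => c) = c := by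
  simp [Ex, tsum_mul_right, tsum_p]

lemma Ex_mono {α : Type} (p : PMF α) (f h : α → ℝ) (B B' : ℝ) (hf : ∀ a, |f a| ≤ B)
    (hh : ∀ a, |h a| ≤ B') (hfh : ∀ a, f a ≤ h a) : Ex p f ≤ Ex p h :=
  (summ_E p f B hf).tsum_le_tsum
    (fun a => mul_le_mul_of_nonneg_left (hfh a) ENNReal.toReal_nonneg) (summ_E p h B' hh)

lemma Ex_abs {α : Type} (p : PMF α) (f : α → ℝ) (B : ℝ) (hf : ∀ a, |f a| ≤ B) :
    |Ex p f| ≤ B := by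
  rw [abs_le]
  constructor
  · rw [← Ex_const p (-B)]
    exact Ex_mono p _ _ |-B| B (fun _ => le_rfl) hf (fun a => (abs_le.1 (hf a)).1)
  · rw [← Ex_const p B]
    exact Ex_mono p _ _ B |B| hf (fun _ => le_rfl) (fun a => (abs_le.1 (hf a)).2)

lemma Ex_bind {α β : Type} (p : PMF α) (q : α → PMF β) (f : β → ℝ) (B : ℝ)
    (hf : ∀ a, |f a| ≤ B) : Ex (p.bind q) f = Ex p (fun a => Ex (q a) f) := by
  unfold Ex
  have h1 : ∀ b, ((p.bind q) b).toReal = ∑' a, (p a).toReal * (q a b).toReal := by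
    intro b
    rw [PMF.bind_apply, ENNReal.tsum_toReal_eq]
    · simp
    · intro a
      exact ENNReal.mul_ne_top (p.apply_ne_top a) ((q a).apply_ne_top b)
  have hs : Summable (fun x : α × β => (p x.1).toReal * ((q x.1 x.2).toReal * f x.2)) := by
    have h0 : Summable (fun x : α × β => (p x.1).toReal * (q x.1 x.2).toReal) := by
      rw [summable_prod_of_nonneg
        (fun x => mul_nonneg ENNReal.toReal_nonneg ENNReal.toReal_nonneg)]
      refine ⟨fun a => Summable.mul_left (p a).toReal (summ_p (q a)), ?_⟩
      have he : (fun a => ∑' b, (p a).toReal * (q a b).toReal) = fun a => (p a).toReal := by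
        funext a
        rw [tsum_mul_left, tsum_p, mul_one]
      exact he ▸ summ_p p
    refine Summable.of_norm_bounded (h0.mul_right B) (fun a => ?_)
    have h9 : 0 ≤ (p a.1).toReal * (q a.1 a.2).toReal :=
      mul_nonneg ENNReal.toReal_nonneg ENNReal.toReal_nonneg
    rw [Real.norm_eq_abs, ← mul_assoc, abs_mul, abs_of_nonneg h9]
    exact mul_le_mul_of_nonneg_left (hf _) h9
  have h2 : ∀ b, ((p.bind q) b).toReal * f b
      = ∑' a, (p a).toReal * ((q a b).toReal * f b) := by
    intro b
    rw [h1, ← tsum_mul_right]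
    exact tsum_congr (fun a => mul_assoc _ _ _)
  rw [tsum_congr h2, Summable.tsum_comm hs]
  exact tsum_congr (fun a => tsum_mul_left)

lemma Ex_pure {α : Type} (a : α) (f : α → ℝ) : Ex (PMF.pure a) f = f a := by
  unfold Ex
  rw [tsum_eq_single a]
  · simp
  · intro b hb; simp [hb]

lemma Ex_map {α β : Type} (p : PMF α) (s : α → β) (f : β → ℝ) (B : ℝ)
    (hf : ∀ a, |f a| ≤ B) : Ex (p.map s) f = Ex p (fun a => f (s a)) := by
  rw [← PMF.bind_pure_comp, Ex_bind _ _ _ B hf]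
  simp [Ex_pure]

lemma Ex_congr {α : Type} (p : PMF α) (f h : α → ℝ) (hfh : ∀ a, p a ≠ 0 → f a = h a) :
    Ex p f = Ex p h := by
  unfold Ex
  refine tsum_congr (fun a => ?_)
  by_cases h0 : p a = 0
  · simp [h0]
  · rw [hfh a h0]

lemma Ex_sub {α : Type} (p : PMF α) (f h : α → ℝ) (B B' : ℝ) (hf : ∀ a, |f a| ≤ B)
    (hh : ∀ a, |h a| ≤ B') : Ex p (fun a => f a - h a) = Ex p f - Ex p h := by
  unfold Ex
  rw [← (summ_E p f B hf).tsum_sub (summ_E p h B' hh)]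
  simp_rw [mul_sub]

/-- disintegration -/
lemma disint {α κ : Type} (p : PMF α) (f : α → κ) :
    ∃ R : κ → PMF α, p = (p.map f).bind R ∧ ∀ k, p.map f k ≠ 0 → ∀ x, R k x ≠ 0 → f x = k := by
  classical
  have hne : ∀ k, p.map f k ≠ 0 → ∃ a ∈ {x | f x = k}, a ∈ p.support := by
    intro k hk
    rw [← PMF.mem_support_iff, PMF.mem_support_map_iff] at hk
    obtain ⟨a, ha, rfl⟩ := hk
    exact ⟨a, rfl, ha⟩
  obtain ⟨a0, _⟩ := p.support_nonempty
  refine ⟨fun k => if h : p.map f k ≠ 0 then p.filter {x | f x = k} (hne k h) else PMF.pure a0,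
    ?_, ?_⟩
  · ext x
    rw [PMF.bind_apply, tsum_eq_single (f x)]
    · by_cases h : p.map f (f x) = 0
      · refine Eq.trans ?_ (Eq.symm (mul_eq_zero_of_left h _))
        by_contra hx
        have : f x ∈ (p.map f).support := by
          rw [PMF.mem_support_map_iff]; exact ⟨x, hx, rfl⟩
        exact this h
      · simp only [ne_eq, h, not_false_eq_true, dite_true]
        rw [PMF.filter_apply]
        have e1 : ∑' x', Set.indicator {y | f y = f x} (⇑p) x' = p.map f (f x) := by
          rw [PMF.map_apply]
          refine tsum_congr (fun y => ?_)
          simp [Set.indicator, eq_comm]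
        rw [e1, Set.indicator_of_mem (by simp), mul_comm, mul_assoc,
          ENNReal.inv_mul_cancel h (PMF.apply_ne_top _ _), mul_one]
    · intro k hk
      by_cases h : p.map f k = 0
      · simp [h]
      · simp only [ne_eq, h, not_false_eq_true, dite_true]
        rw [PMF.filter_apply_eq_zero_of_notMem _ (by simpa using hk.symm), mul_zero]
  · intro k hk x hx
    simp only [hk, ne_eq, not_false_eq_true, dite_true] at hx
    by_contra hh
    exact hx (PMF.filter_apply_eq_zero_of_notMem _ hh)

lemma tower {α κ : Type} (p : PMF α) (f : α → κ) :
    ∃ R : κ → PMF α, ∀ (H : κ → α → ℝ) (B : ℝ), (∀ k a, |H k a| ≤ B) →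
      Ex p (fun x => Ex (R (f x)) (fun y => H (f x) y)) = Ex p (fun x => H (f x) x) := by
  obtain ⟨R, hR, hR2⟩ := disint p f
  refine ⟨R, fun H B hB => ?_⟩
  rw [← Ex_map p f (fun k => Ex (R k) (fun y => H k y)) B (fun k => Ex_abs _ _ B (hB k))]
  conv_rhs => rw [hR]
  rw [Ex_bind _ _ _ B (fun x => hB _ x)]
  refine Ex_congr _ _ _ (fun k hk => Ex_congr _ _ _ (fun x hx => ?_))
  rw [hR2 k hk x hx]

variable {K : Type}

noncomputable def G (g : K → ℕ → ℕ → ℝ) (k : K) (p q : PMF ℕ) : ℝ :=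
  Ex p (fun i => Ex q (fun j => g k i j))

lemma payoff_eq (u : InfoStruct K) (g : K → ℕ → ℕ → ℝ) (σ τ : Garbling) :
    payoff u g σ τ = Ex u (fun x => G g x.1 (σ x.2.1) (τ x.2.2)) := by
  unfold payoff G Ex
  simp_rw [← tsum_mul_left, mul_assoc]

section
variable (g : K → ℕ → ℕ → ℝ) (hg : ∀ k i j, |g k i j| ≤ 1)
include hg

lemma G_abs (k : K) (p q : PMF ℕ) : |G g k p q| ≤ 1 :=
  Ex_abs _ _ 1 (fun _ => Ex_abs _ _ 1 (fun _ => hg _ _ _))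

lemma G_bind_left {α : Type} (k : K) (r : PMF α) (σ : α → PMF ℕ) (q : PMF ℕ) :
    G g k (r.bind σ) q = Ex r (fun a => G g k (σ a) q) := by
  unfold G
  exact Ex_bind _ _ _ 1 (fun _ => Ex_abs _ _ 1 (fun _ => hg _ _ _))

lemma G_bind_right {α : Type} (k : K) (r : PMF α) (τ : α → PMF ℕ) (p : PMF ℕ) :
    G g k p (r.bind τ) = Ex r (fun a => G g k p (τ a)) := by
  have comm : ∀ p q, G g k p q = G (fun k i j => g k j i) k q p := by
    intro p q
    unfold G Ex
    simp_rw [← tsum_mul_left]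
    rw [Summable.tsum_comm]
    · simp_rw [mul_left_comm]
    · have h0 : Summable (fun x : ℕ × ℕ => (q x.1).toReal * (p x.2).toReal) :=
        (summ_p q).mul_of_nonneg (summ_p p) (fun _ => ENNReal.toReal_nonneg)
          (fun _ => ENNReal.toReal_nonneg)
      refine Summable.of_norm_bounded h0 (fun a => ?_)
      show |(p a.2).toReal * ((q a.1).toReal * g k a.2 a.1)| ≤ _
      rw [mul_left_comm, ← mul_assoc, abs_mul, abs_of_nonneg (by positivity)]
      exact mul_le_of_le_one_right (by positivity) (hg _ _ _)
  rw [comm, G_bind_left _ (fun k i j => hg k j i)]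
  simp_rw [comm]

lemma payoff_abs (u : InfoStruct K) (σ τ : Garbling) : |payoff u g σ τ| ≤ 1 := by
  rw [payoff_eq]
  exact Ex_abs _ _ 1 (fun _ => G_abs g hg _ _ _)

lemma val_le (u v : InfoStruct K) (δ : ℝ)
    (h : ∀ σ : Garbling, ∃ σ' : Garbling, ∀ τ' : Garbling, ∃ τ : Garbling,
      payoff u g σ τ ≤ payoff v g σ' τ' + δ) : val u g ≤ val v g + δ := by
  have bd : ∀ (w : InfoStruct K) σ, BddBelow (Set.range (fun τ => payoff w g σ τ)) := by
    intro w σ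
    refine ⟨-1, ?_⟩
    rintro _ ⟨τ, rfl⟩
    exact (abs_le.1 (payoff_abs g hg w σ τ)).1
  have bu : BddAbove (Set.range (fun σ => ⨅ τ, payoff v g σ τ)) := by
    refine ⟨1, ?_⟩
    rintro _ ⟨σ, rfl⟩
    exact (ciInf_le (bd v σ) σ).trans (abs_le.1 (payoff_abs g hg v σ σ)).2
  haveI : Nonempty Garbling := ⟨fun _ => PMF.pure 0⟩
  refine ciSup_le (fun σ => ?_)
  obtain ⟨σ', hσ⟩ := h σ
  have : (⨅ τ, payoff u g σ τ) - δ ≤ ⨅ τ, payoff v g σ' τ := by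
    refine le_ciInf (fun τ' => ?_)
    obtain ⟨τ, hτ⟩ := hσ τ'
    have := ciInf_le (bd u σ) τ
    linarith
  have h2 : (⨅ τ, payoff v g σ' τ) ≤ val v g := le_ciSup bu σ'
  linarith
end

open Classical in
lemma Ex_close {α : Type} (p : PMF α) (f h : α → ℝ) (hf : ∀ a, |f a| ≤ 1) (hh : ∀ a, |h a| ≤ 1)
    (S : α → Prop) (hS : ∀ a, S a → f a = h a) (ε : ℝ)
    (hp : 1 - 2 * ε ≤ Ex p (fun a => if S a then 1 else 0)) : Ex p f ≤ Ex p h + 4 * ε := by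
  have hI : ∀ a, |(if S a then 1 else 0 : ℝ)| ≤ 1 := by intro a; split_ifs <;> simp
  have hb : ∀ a, |(1 : ℝ) - if S a then 1 else 0| ≤ 1 := by intro a; split_ifs <;> simp
  have h1 := Ex_sub p f h 1 1 hf hh
  have h2 := Ex_sub p (fun _ => (1:ℝ)) (fun a => if S a then 1 else 0) 1 1 (by simp) hI
  rw [Ex_const] at h2
  have h3 : Ex p (fun a => f a - h a) ≤ Ex p (fun a => 2 * ((1 : ℝ) - if S a then 1 else 0)) := by
    refine Ex_mono p _ _ 2 2 (fun a => ?_) (fun a => ?_) (fun a => ?_)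
    · have := abs_le.1 (hf a); have := abs_le.1 (hh a)
      rw [abs_le]; constructor <;> linarith
    · rw [abs_mul, abs_two]; linarith [hb a]
    · have := abs_le.1 (hf a); have := abs_le.1 (hh a)
      by_cases hs : S a
      · simp [hs, hS a hs]
      · simp only [hs, if_false]; linarith
  have h4 : Ex p (fun a => 2 * ((1 : ℝ) - if S a then 1 else 0))
      = 2 * Ex p (fun a => (1 : ℝ) - if S a then 1 else 0) := by
    unfold Ex; rw [← tsum_mul_left]; simp_rw [mul_left_comm]
  linarith

open Classical in
lemma knowC (ε : ℝ) (hε : 0 ≤ ε) (u : InfoStruct K) (κ : ℕ → K)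
    (h1 : 1 - ε ≤ ∑' x : K × ℕ × ℕ,
      Set.indicator {y : K × ℕ × ℕ | 1 - ε ≤ condStateC u κ y.2.1}
        (fun y => (u y).toReal) x) :
    1 - 2 * ε ≤ Ex u (fun x => if x.1 = κ x.2.1 then 1 else 0) := by
  set gd : ℕ → Prop := fun c => 1 - ε ≤ condStateC u κ c with hgd
  have hI : ∀ (P : Prop), |(if P then 1 else 0 : ℝ)| ≤ 1 := by intro a; split_ifs <;> simp
  have e1 : (∑' x : K × ℕ × ℕ,
      Set.indicator {y : K × ℕ × ℕ | 1 - ε ≤ condStateC u κ y.2.1}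
        (fun y => (u y).toReal) x) = Ex u (fun x => if gd x.2.1 then 1 else 0) := by
    unfold Ex
    refine tsum_congr (fun x => ?_)
    simp [Set.indicator, hgd]
  rw [e1] at h1
  have hP1 : Ex u (fun x => if gd x.2.1 then (1:ℝ) else 0) ≤ 1 :=
    (le_abs_self _).trans (Ex_abs _ _ 1 (fun _ => hI _))
  -- main inequality
  set F : K × ℕ × ℕ → ℝ := fun x =>
    (if gd x.2.1 then 1 else 0) * ((if x.1 = κ x.2.1 then 1 else 0) - (1 - ε)) with hF
  have hFb : ∀ x, |F x| ≤ 2 + ε := by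
    intro x
    simp only [hF]
    rw [abs_mul]
    have : |(if x.1 = κ x.2.1 then 1 else 0 : ℝ) - (1 - ε)| ≤ 2 + ε := by
      rw [abs_le]; split_ifs <;> constructor <;> linarith
    calc _ ≤ 1 * (2 + ε) := mul_le_mul (hI _) this (abs_nonneg _) zero_le_one
      _ = _ := one_mul _
  have main : 0 ≤ Ex u F := by
    let E : ℕ × (K × ℕ) ≃ K × ℕ × ℕ :=
      ⟨fun x => (x.2.1, x.1, x.2.2), fun x => (x.2.1, x.1, x.2.2), fun _ => rfl, fun _ => rfl⟩
    unfold Ex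
    have hs := summ_E u F _ hFb
    rw [← E.tsum_eq]
    have hs' := (E.summable_iff).2 hs
    have hs'' : Summable (fun c => (u (E c)).toReal * F (E c)) := hs'
    rw [hs''.tsum_prod]
    refine tsum_nonneg (fun c => ?_)
    by_cases hc : gd c
    swap
    · simp [E, hF, hc]
    have su : Summable (fun x : K × ℕ => (u (x.1, c, x.2)).toReal) := by
      have := ((E.summable_iff).2 (summ_p u)).prod_factor c
      exact this
    have su1 : Summable (fun x : K × ℕ => (u (x.1, c, x.2)).toReal *
        (if x.1 = κ c then 1 else 0)) := by
      refine Summable.of_norm_bounded su (fun x => ?_)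
      rw [Real.norm_eq_abs, abs_mul, abs_of_nonneg ENNReal.toReal_nonneg]
      exact mul_le_of_le_one_right ENNReal.toReal_nonneg (hI _)
    have et : ∑' x : K × ℕ, (u (E (c, x))).toReal * F (E (c, x)) =
        ∑' x : K × ℕ, (u (x.1, c, x.2)).toReal * (if x.1 = κ c then 1 else 0)
         - (1 - ε) * ∑' x : K × ℕ, (u (x.1, c, x.2)).toReal := by
      rw [← tsum_mul_left, ← su1.tsum_sub (su.mul_left _)]
      refine tsum_congr (fun x => ?_)
      simp only [E, hF, Equiv.coe_fn_mk, hc, if_true]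
      ring
    have em : (∑' (k : K) (d : ℕ), u (k, c, d)).toReal
        = ∑' x : K × ℕ, (u (x.1, c, x.2)).toReal := by
      rw [← ENNReal.tsum_prod (f := fun k d => u (k, c, d)),
        ENNReal.tsum_toReal_eq (fun a => u.apply_ne_top _)]
    have ek : (∑' d : ℕ, u (κ c, c, d)).toReal
        = ∑' x : K × ℕ, (u (x.1, c, x.2)).toReal * (if x.1 = κ c then 1 else 0) := by
      rw [su1.tsum_prod, tsum_eq_single (κ c), ENNReal.tsum_toReal_eq (fun a => u.apply_ne_top _)]
      · simp
      · intro k hk; simp [hk]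
    rw [et, ← em, ← ek]
    have hc' : 1 - ε ≤ condStateC u κ c := hc
    unfold condStateC at hc'
    have n1 : 0 ≤ (∑' (k : K) (d : ℕ), u (k, c, d)).toReal := ENNReal.toReal_nonneg
    have n2 : 0 ≤ (∑' d : ℕ, u (κ c, c, d)).toReal := ENNReal.toReal_nonneg
    rcases n1.eq_or_lt with h0 | h0
    · rw [← h0]; linarith
    · rw [le_div_iff₀ h0] at hc'; linarith
  have h5 : Ex u F = Ex u (fun x => (if gd x.2.1 then 1 else 0) *
        (if x.1 = κ x.2.1 then 1 else 0))
      - (1 - ε) * Ex u (fun x => if gd x.2.1 then 1 else 0) := by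
    have hm : ∀ x : K × ℕ × ℕ, |(if gd x.2.1 then 1 else 0) *
        (if x.1 = κ x.2.1 then 1 else 0 : ℝ)| ≤ 1 := by
      intro x; split_ifs <;> simp
    unfold Ex
    rw [← tsum_mul_left, ← (summ_E u _ 1 hm).tsum_sub
      ((summ_E u _ 1 (fun _ => hI _)).mul_left _)]
    refine tsum_congr (fun x => ?_)
    simp only [hF]
    ring
  have h6 : Ex u (fun x => (if gd x.2.1 then 1 else 0) *
        (if x.1 = κ x.2.1 then 1 else 0)) ≤ Ex u (fun x => if x.1 = κ x.2.1 then (1:ℝ) else 0) := by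
    refine Ex_mono u _ _ 1 1 (fun x => ?_) (fun x => hI _) (fun x => ?_)
    · split_ifs <;> simp
    · split_ifs <;> simp
  nlinarith

open Classical in
lemma knowD (ε : ℝ) (hε : 0 ≤ ε) (u : InfoStruct K) (κ : ℕ → K)
    (h1 : 1 - ε ≤ ∑' x : K × ℕ × ℕ,
      Set.indicator {y : K × ℕ × ℕ | 1 - ε ≤ condStateD u κ y.2.2}
        (fun y => (u y).toReal) x) :
    1 - 2 * ε ≤ Ex u (fun x => if x.1 = κ x.2.2 then 1 else 0) := by
  let E : K × ℕ × ℕ ≃ K × ℕ × ℕ :=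
    ⟨fun x => (x.1, x.2.2, x.2.1), fun x => (x.1, x.2.2, x.2.1), fun _ => rfl, fun _ => rfl⟩
  have hw : ∀ x, (u.map E) x = u (E x) := by
    intro x
    rw [PMF.map_apply, tsum_eq_single (E x)]
    · have : E (E x) = x := rfl
      simp [this]
    · intro y hy
      rw [if_neg]
      rintro rfl
      exact hy rfl
  have hcd : ∀ c, condStateC (u.map E) κ c = condStateD u κ c := by
    intro c
    unfold condStateC condStateD
    simp_rw [hw]
    rfl
  have := knowC ε hε (u.map E) κ (by
    refine h1.trans (le_of_eq ?_)
    rw [← E.tsum_eq]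
    refine tsum_congr (fun x => ?_)
    simp only [Set.indicator, Set.mem_ofPred_eq, hcd, hw]
    rfl)
  rw [Ex_map u E _ 1 (by intro a; split_ifs <;> simp)] at this
  exact this

/-- Approximate knowledge is close to common knowledge: if `u` exhibits
`ε`-knowledge of the state (witnessed by `κ`), and `v` is the common-knowledge
structure in which both players are told the state (states embedded in the
signal space `ℕ` by an injection `e`), then `d(u,v) ≤ 20ε`. -/
theorem approximate_knowledge (K : Type) [Fintype K]
    (hK : 2 ≤ Fintype.card K) (ε : ℝ) (hε : 0 ≤ ε)
    (u : InfoStruct K) (κ : ℕ → K)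
    (h1 : 1 - ε ≤ ∑' x : K × ℕ × ℕ,
      Set.indicator {y : K × ℕ × ℕ | 1 - ε ≤ condStateC u κ y.2.1}
        (fun y => (u y).toReal) x)
    (h2 : 1 - ε ≤ ∑' x : K × ℕ × ℕ,
      Set.indicator {y : K × ℕ × ℕ | 1 - ε ≤ condStateD u κ y.2.2}
        (fun y => (u y).toReal) x)
    (e : K → ℕ) (he : Function.Injective e) :
    dVal u (u.map (fun x => (x.1, e x.1, e x.1))) ≤ 20 * ε := by
  haveI : Nonempty K := ⟨κ 0⟩
  refine Real.iSup_le (fun g => ?_) (by linarith)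
  obtain ⟨g, L, hg0, -, -⟩ := g
  have hg : ∀ k i j, |g k i j| ≤ 1 := fun k i j => abs_le.2 ⟨(hg0 k i j).1, (hg0 k i j).2⟩
  have hGb := G_abs g hg
  obtain ⟨R, hR⟩ := tower u Prod.fst
  have k1 := knowC ε hε u κ h1
  have k2 := knowD ε hε u κ h2
  have hinv : ∀ k, Function.invFun e (e k) = k := Function.leftInverse_invFun he
  have hv : ∀ σ τ : Garbling, payoff (u.map (fun x => (x.1, e x.1, e x.1))) g σ τ
      = Ex u (fun x => G g x.1 (σ (e x.1)) (τ (e x.1))) := by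
    intro σ τ
    rw [payoff_eq, Ex_map u _ _ 1 (fun _ => hGb _ _ _)]
  have A : val u g ≤ val (u.map (fun x => (x.1, e x.1, e x.1))) g + 4 * ε := by
    refine val_le g hg _ _ _ (fun σ => ⟨fun n => (R (Function.invFun e n)).bind
      (fun y => σ y.2.1), fun τ' => ⟨fun d => τ' (e (κ d)), ?_⟩⟩)
    rw [hv, payoff_eq]
    simp_rw [hinv, G_bind_left g hg]
    rw [hR (fun k y => G g k (σ y.2.1) (τ' (e k))) 1 (fun _ _ => hGb _ _ _)]
    refine Ex_close u _ _ (fun _ => hGb _ _ _) (fun _ => hGb _ _ _)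
      (fun x => x.1 = κ x.2.2) (fun x hx => ?_) ε k2
    rw [hx]
  have B : val (u.map (fun x => (x.1, e x.1, e x.1))) g ≤ val u g + 4 * ε := by
    refine val_le g hg _ _ _ (fun σ => ⟨fun c => σ (e (κ c)), fun τ' =>
      ⟨fun n => (R (Function.invFun e n)).bind (fun y => τ' y.2.2), ?_⟩⟩)
    rw [hv, payoff_eq]
    simp_rw [hinv, G_bind_right g hg]
    rw [hR (fun k y => G g k (σ (e k)) (τ' y.2.2)) 1 (fun _ _ => hGb _ _ _)]
    refine Ex_close u _ _ (fun _ => hGb _ _ _) (fun _ => hGb _ _ _)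
      (fun x => x.1 = κ x.2.1) (fun x hx => ?_) ε k1
    rw [hx]
  show |val u g - val (u.map (fun x => (x.1, e x.1, e x.1))) g| ≤ 20 * ε
  rw [abs_le]
  constructor <;> linarith

end ValueDistance
end

section
/- Let N be an even positive integer, A = {1,…,N}, and let S_a and S_b be two independent random subsets of A, each uniformly distributed over the collection of subsets of A of cardinality N/2. Then for every γ > 0: P( | |S_a ∩ S_b| − N/4 | ≥ γN ) ≤ (1/2)·e⁴·N·e^{−2γ²N}. -/
open scoped BigOperators ENNReal

namespace ErdosMarkov

/-- `𝒮_A` : the collection of all subsets of `A = {1,…,N}` of cardinality `N/2`. -/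
def SA (N : ℕ) : Finset (Finset ℕ) :=
  (Finset.Icc 1 N).powerset.filter (fun t => t.card = N / 2)

theorem sum_sign (s t : Finset ℕ) (μ : ℝ) :
    ∑ i ∈ t, (if i ∈ s then μ else -μ) = μ * (2 * ((s ∩ t).card : ℝ) - t.card) := by
  have h : ∀ i ∈ t, (if i ∈ s then μ else -μ) = 2 * μ * (if i ∈ s then 1 else 0) - μ := by
    intro i _
    split_ifs <;> ring
  rw [Finset.sum_congr rfl h, Finset.sum_sub_distrib, ← Finset.mul_sum]
  have h2 : ∑ i ∈ t, (if i ∈ s then (1 : ℝ) else 0) = ((s ∩ t).card : ℝ) := by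
    rw [Finset.sum_boole, Finset.filter_mem_eq_inter, Finset.inter_comm]
  rw [h2]
  simp
  ring

theorem one_add_exp_le (g : ℝ) : 1 + Real.exp g ≤ 2 * Real.exp (g ^ 2 / 8) * Real.exp (g / 2) := by
  have h := Real.cosh_le_exp_half_sq (g / 2)
  have e : (g / 2) ^ 2 / 2 = g ^ 2 / 8 := by ring
  rw [e] at h
  have h1 : 1 + Real.exp g = 2 * Real.cosh (g / 2) * Real.exp (g / 2) := by
    rw [Real.cosh_eq]
    have a : Real.exp (-(g / 2)) * Real.exp (g / 2) = 1 := by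
      rw [← Real.exp_add]; simp
    have b : Real.exp (g / 2) * Real.exp (g / 2) = Real.exp g := by
      rw [← Real.exp_add]; ring_nf
    linear_combination -a - b
  rw [h1]
  gcongr

theorem mgf (n : ℕ) (s : Finset ℕ) (hs : s ∈ SA (2 * n)) (μ : ℝ) :
    ∑ t ∈ SA (2 * n), Real.exp (μ * (2 * ((s ∩ t).card : ℝ) - n))
      ≤ 4 ^ n * Real.exp (μ ^ 2 * n / 4) := by
  have hs' := hs
  simp only [SA, Finset.mem_filter, Finset.mem_powerset] at hs'
  obtain ⟨hsA, hsc⟩ := hs'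
  set g : ℕ → ℝ := fun i => if i ∈ s then μ else -μ with hg
  calc ∑ t ∈ SA (2 * n), Real.exp (μ * (2 * ((s ∩ t).card : ℝ) - n))
      = ∑ t ∈ SA (2 * n), ∏ i ∈ t, Real.exp (g i) := by
        refine Finset.sum_congr rfl fun t ht => ?_
        simp only [SA, Finset.mem_filter, Finset.mem_powerset] at ht
        rw [← Real.exp_sum, hg, sum_sign, ht.2]
        simp
    _ ≤ ∑ t ∈ (Finset.Icc 1 (2 * n)).powerset, ∏ i ∈ t, Real.exp (g i) := by
        apply Finset.sum_le_sum_of_subset_of_nonneg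
        · exact Finset.filter_subset _ _
        · intros; positivity
    _ = ∏ i ∈ Finset.Icc 1 (2 * n), (1 + Real.exp (g i)) := (Finset.prod_one_add _).symm
    _ ≤ ∏ i ∈ Finset.Icc 1 (2 * n), (2 * Real.exp (μ ^ 2 / 8) * Real.exp (g i / 2)) := by
        apply Finset.prod_le_prod
        · intros; positivity
        · intro i _
          have h := one_add_exp_le (g i)
          have h2 : g i ^ 2 = μ ^ 2 := by
            simp only [hg]; split_ifs <;> ring
          rwa [h2] at h
    _ = 4 ^ n * Real.exp (μ ^ 2 * n / 4) := by
        rw [Finset.prod_mul_distrib, ← Real.exp_sum, ← Finset.sum_div, hg, sum_sign,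
          Finset.inter_eq_left.mpr hsA, hsc]
        simp only [Finset.prod_const, Nat.card_Icc, Nat.add_sub_cancel, mul_pow, ← Real.exp_nat_mul]
        rw [pow_mul]
        have e : (2 * n / 2 : ℕ) = n := by omega
        rw [e]
        push_cast
        simp only [sub_self, mul_zero, zero_div, Real.exp_zero, mul_one]
        norm_num
        ring_nf

theorem count_bad (n : ℕ) (s : Finset ℕ) (hs : s ∈ SA (2 * n)) (γ : ℝ) (hγ : 0 < γ) :
    (((SA (2 * n)).filter (fun t => γ * (2 * n : ℕ) ≤ |((s ∩ t).card : ℝ) - (2 * n : ℕ) / 4|)).card : ℝ)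
      ≤ 2 * 4 ^ n * Real.exp (-16 * γ ^ 2 * n) := by
  have h1 := mgf n s hs (8 * γ)
  have h2 := mgf n s hs (-(8 * γ))
  have key : (((SA (2 * n)).filter (fun t => γ * (2 * n : ℕ) ≤ |((s ∩ t).card : ℝ) - (2 * n : ℕ) / 4|)).card : ℝ)
      * Real.exp (32 * γ ^ 2 * n) ≤ ∑ t ∈ SA (2 * n), (Real.exp (8 * γ * (2 * ((s ∩ t).card : ℝ) - n)) +
        Real.exp (-(8 * γ) * (2 * ((s ∩ t).card : ℝ) - n))) := by
    rw [← nsmul_eq_mul]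
    refine (Finset.card_nsmul_le_sum _ _ _ ?_).trans
      (Finset.sum_le_sum_of_subset_of_nonneg (Finset.filter_subset _ _) ?_)
    · intro t ht
      have hb := (Finset.mem_filter.mp ht).2
      push_cast at hb
      rcases le_abs.mp hb with hb | hb
      · have : Real.exp (32 * γ ^ 2 * n) ≤ Real.exp (8 * γ * (2 * ((s ∩ t).card : ℝ) - n)) := by
          apply Real.exp_le_exp.mpr
          nlinarith [mul_le_mul_of_nonneg_left hb hγ.le]
        have := Real.exp_pos (-(8 * γ) * (2 * ((s ∩ t).card : ℝ) - n))
        linarith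
      · have : Real.exp (32 * γ ^ 2 * n) ≤ Real.exp (-(8 * γ) * (2 * ((s ∩ t).card : ℝ) - n)) := by
          apply Real.exp_le_exp.mpr
          nlinarith [mul_le_mul_of_nonneg_left hb hγ.le]
        have := Real.exp_pos (8 * γ * (2 * ((s ∩ t).card : ℝ) - n))
        linarith
    · intros; positivity
  rw [Finset.sum_add_distrib] at key
  have e1 : (8 * γ) ^ 2 * n / 4 = 16 * γ ^ 2 * n := by ring
  have e2 : (-(8 * γ)) ^ 2 * n / 4 = 16 * γ ^ 2 * n := by ring
  rw [e1] at h1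
  rw [e2] at h2
  have e3 : Real.exp (-16 * γ ^ 2 * n) * Real.exp (32 * γ ^ 2 * n) = Real.exp (16 * γ ^ 2 * n) := by
    rw [← Real.exp_add]; ring_nf
  refine le_of_mul_le_mul_right ?_ (Real.exp_pos (32 * γ ^ 2 * n))
  rw [mul_assoc (2 * 4 ^ n : ℝ), e3]
  linarith

theorem card_SA (n : ℕ) : (SA (2 * n)).card = n.centralBinom := by
  have : SA (2 * n) = (Finset.Icc 1 (2 * n)).powersetCard n := by
    ext t
    simp [SA, Finset.mem_powersetCard]
  rw [this, Finset.card_powersetCard, Nat.centralBinom]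
  simp

theorem compl_null {Ω : Type} [MeasurableSpace Ω] (P : MeasureTheory.Measure Ω)
    [MeasureTheory.IsProbabilityMeasure P] (S : Ω → Finset ℕ) (F : Finset (Finset ℕ))
    (hF : F.Nonempty)
    (hm : ∀ s : Finset ℕ, MeasurableSet (S ⁻¹' {s}))
    (hu : ∀ s ∈ F, P (S ⁻¹' {s}) = (F.card : ENNReal)⁻¹) :
    P {ω | S ω ∉ F} = 0 := by
  have e : {ω | S ω ∉ F} = (⋃ s ∈ F, S ⁻¹' {s})ᶜ := by
    ext ω; simp
  have hM : MeasurableSet (⋃ s ∈ F, S ⁻¹' {s}) := F.measurableSet_biUnion fun s _ => hm s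
  rw [e, MeasureTheory.prob_compl_eq_zero_iff hM, MeasureTheory.measure_biUnion_finset _ (fun s _ => hm s),
    Finset.sum_congr rfl hu, Finset.sum_const, nsmul_eq_mul]
  · exact ENNReal.mul_inv_cancel (by simpa using hF.ne_empty) (by simp)
  · intro s _ t _ hst
    exact Disjoint.preimage _ (by simpa using hst)

/-- Lemma: if `S_a, S_b` are two independent random subsets of `A = {1,…,N}`,
each uniformly distributed over the subsets of cardinality `N/2`, then for
every `γ > 0`, `P(| |S_a ∩ S_b| − N/4 | ≥ γN) ≤ (1/2)·e⁴·N·e^{−2γ²N}`. -/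
theorem intersection_concentration (N : ℕ) (hNe : Even N) (hN : 0 < N)
    (Ω : Type) [MeasurableSpace Ω] (P : MeasureTheory.Measure Ω)
    [MeasureTheory.IsProbabilityMeasure P]
    (Sa Sb : Ω → Finset ℕ)
    (hmA : ∀ s : Finset ℕ, MeasurableSet (Sa ⁻¹' {s}))
    (hmB : ∀ s : Finset ℕ, MeasurableSet (Sb ⁻¹' {s}))
    (huniA : ∀ s ∈ SA N, P (Sa ⁻¹' {s}) = ((SA N).card : ENNReal)⁻¹)
    (huniB : ∀ s ∈ SA N, P (Sb ⁻¹' {s}) = ((SA N).card : ENNReal)⁻¹)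
    (hindep : ∀ s t : Finset ℕ,
      P (Sa ⁻¹' {s} ∩ Sb ⁻¹' {t}) = P (Sa ⁻¹' {s}) * P (Sb ⁻¹' {t}))
    (γ : ℝ) (hγ : 0 < γ) :
    (P {ω | γ * N ≤ |((Sa ω ∩ Sb ω).card : ℝ) - N / 4|}).toReal
      ≤ (1 / 2) * Real.exp 4 * N * Real.exp (-2 * γ ^ 2 * N) := by
  obtain ⟨n, rfl⟩ := hNe.two_dvd
  have hn : 0 < n := by omega
  have hc := card_SA n
  have hcpos : 0 < (SA (2 * n)).card := by rw [hc]; exact Nat.centralBinom_pos n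
  have hne := Finset.card_pos.mp hcpos
  have hA := compl_null P Sa _ hne hmA huniA
  have hB := compl_null P Sb _ hne hmB huniB
  set M := (SA (2 * n)).card with hM
  let bad : Finset ℕ → Finset (Finset ℕ) := fun s =>
    (SA (2 * n)).filter (fun t => γ * (2 * n : ℕ) ≤ |((s ∩ t).card : ℝ) - (2 * n : ℕ) / 4|)
  have hsub : {ω | γ * (2 * n : ℕ) ≤ |((Sa ω ∩ Sb ω).card : ℝ) - (2 * n : ℕ) / 4|} ⊆
      ({ω | Sa ω ∉ SA (2 * n)} ∪ {ω | Sb ω ∉ SA (2 * n)}) ∪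
        ⋃ s ∈ SA (2 * n), ⋃ t ∈ bad s, (Sa ⁻¹' {s} ∩ Sb ⁻¹' {t}) := by
    intro ω hω
    by_cases ha : Sa ω ∈ SA (2 * n)
    · by_cases hb : Sb ω ∈ SA (2 * n)
      · right
        simp only [Set.mem_iUnion]
        exact ⟨Sa ω, ha, Sb ω, Finset.mem_filter.mpr ⟨hb, hω⟩, rfl, rfl⟩
      · left; right; exact hb
    · left; left; exact ha
  have hle : P {ω | γ * (2 * n : ℕ) ≤ |((Sa ω ∩ Sb ω).card : ℝ) - (2 * n : ℕ) / 4|} ≤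
      ∑ s ∈ SA (2 * n), ∑ t ∈ bad s, ((M : ENNReal)⁻¹ * (M : ENNReal)⁻¹) := by
    refine (MeasureTheory.measure_mono hsub).trans ((MeasureTheory.measure_union_le _ _).trans ?_)
    rw [MeasureTheory.measure_union_null hA hB, zero_add]
    refine (MeasureTheory.measure_biUnion_finset_le _ _).trans (Finset.sum_le_sum fun s hs => ?_)
    refine (MeasureTheory.measure_biUnion_finset_le _ _).trans (Finset.sum_le_sum fun t ht => ?_)
    rw [hindep, huniA s hs, huniB t (Finset.mem_filter.mp ht).1]
  have hMr : (0 : ℝ) < M := by exact_mod_cast hcpos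
  have hfin : ∑ s ∈ SA (2 * n), ∑ t ∈ bad s, ((M : ENNReal)⁻¹ * (M : ENNReal)⁻¹) ≠ ⊤ := by
    refine ENNReal.sum_ne_top.mpr fun s _ => ENNReal.sum_ne_top.mpr fun t _ => ?_
    exact ENNReal.mul_ne_top (by simp [hcpos.ne']) (by simp [hcpos.ne'])
  have h1 := ENNReal.toReal_mono hfin hle
  refine h1.trans ?_
  have h2 : (∑ s ∈ SA (2 * n), ∑ t ∈ bad s, ((M : ENNReal)⁻¹ * (M : ENNReal)⁻¹)).toReal
      = ∑ s ∈ SA (2 * n), ((bad s).card : ℝ) * ((M : ℝ)⁻¹ * (M : ℝ)⁻¹) := by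
    simp only [Finset.sum_const, nsmul_eq_mul]
    rw [ENNReal.toReal_sum]
    · simp
    · intro s _
      exact ENNReal.mul_ne_top (by simp) (ENNReal.mul_ne_top (by simp [hcpos.ne']) (by simp [hcpos.ne']))
  rw [h2]
  have h3 : ∑ s ∈ SA (2 * n), ((bad s).card : ℝ) * ((M : ℝ)⁻¹ * (M : ℝ)⁻¹) ≤
      ∑ s ∈ SA (2 * n), (2 * 4 ^ n * Real.exp (-16 * γ ^ 2 * n)) * ((M : ℝ)⁻¹ * (M : ℝ)⁻¹) := by
    refine Finset.sum_le_sum fun s hs => ?_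
    exact mul_le_mul_of_nonneg_right (count_bad n s hs γ hγ) (by positivity)
  refine h3.trans ?_
  rw [Finset.sum_const, nsmul_eq_mul, ← hM]
  have h4 : (4 : ℝ) ^ n ≤ 2 * n * M := by
    rw [hc]
    exact_mod_cast Nat.four_pow_le_two_mul_self_mul_centralBinom n hn
  have h5 : (M : ℝ) * (2 * 4 ^ n * Real.exp (-16 * γ ^ 2 * n) * ((M : ℝ)⁻¹ * (M : ℝ)⁻¹))
      = 2 * (4 ^ n / M) * Real.exp (-16 * γ ^ 2 * n) := by
    field_simp
  rw [h5]
  have h6 : (4 : ℝ) ^ n / M ≤ 2 * n := by rwa [div_le_iff₀ hMr]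
  have h7 : Real.exp (-16 * γ ^ 2 * n) ≤ Real.exp (-2 * γ ^ 2 * (2 * n : ℕ)) := by
    apply Real.exp_le_exp.mpr
    push_cast
    have : 0 ≤ γ ^ 2 * n := by positivity
    linarith
  have h8 : 2 ≤ (1 / 2) * Real.exp 4 := by
    have := Real.add_one_le_exp (4 : ℝ)
    linarith
  calc 2 * ((4 : ℝ) ^ n / M) * Real.exp (-16 * γ ^ 2 * n)
      ≤ (1 / 2) * Real.exp 4 * (2 * n) * Real.exp (-2 * γ ^ 2 * (2 * n : ℕ)) := by gcongr
    _ = _ := by push_cast; ring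

end ErdosMarkov
end
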